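/- Let q ∈ ℂ with 0 < |q| < 1, and let a, b, c, e, f, x, y, z ∈ ℂ with e ≠ 0, e ≠ q^n and f ≠ q^n for all integers n ≥ 1, f ≠ q^{−n} and e ≠ q^{n+1} for all integers n ≥ 0, and let r be a real number with max(|x|, |y|, |f/e|) < r < min(1, 1/|z|) (where 1/|z| is interpreted as +∞ if z = 0). Then ∑_{j,k,m ≥ 0} (a;q)_j (b;q)_k (c;q)_m (e;q)_{j+k−m} / ((q;q)_j (q;q)_k (q;q)_m (f;q)_{j+k−m}) · x^j y^k z^m converges absolutely and equals (2πi)^{−1} ∮_{|t|=r} F(t) · dt/t, the contour being the positively oriented circle of radius r about the origin, where F(t) = (q;q)_∞ (f/e;q)_∞ (et;q)_∞ (q/(et);q)_∞ (ax/t;q)_∞ (by/t;q)_∞ (czt;q)_∞ / ((f;q)_∞ (q/e;q)_∞ (t;q)_∞ (f/(et);q)_∞ (x/t;q)_∞ (y/t;q)_∞ (zt;q)_∞). -/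

import Mathlib

open Finset

/-- The `q`-shifted factorial `(a;q)_n` for an arbitrary integer `n`. -/
noncomputable def qpoch (q a : ℂ) (n : ℤ) : ℂ :=
  if 0 ≤ n then ∏ i ∈ Finset.range n.toNat, (1 - a * q ^ (i : ℤ))
  else (∏ i ∈ Finset.range (-n).toNat, (1 - a * q ^ (n + (i : ℤ))))⁻¹

/-- The infinite `q`-shifted factorial `(a;q)_∞`. -/
noncomputable def qinf (q a : ℂ) : ℂ := ∏' i : ℕ, (1 - a * q ^ i)

/-- General term of the triple series with parameters `a, b, c, e, f`. -/
noncomputable def tripleTerm (q a b c e f x y z : ℂ) : ℕ × ℕ × ℕ → ℂ := fun p =>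
  qpoch q a (p.1 : ℤ) * qpoch q b (p.2.1 : ℤ) * qpoch q c (p.2.2 : ℤ) *
      qpoch q e ((p.1 : ℤ) + (p.2.1 : ℤ) - (p.2.2 : ℤ)) /
    (qpoch q q (p.1 : ℤ) * qpoch q q (p.2.1 : ℤ) * qpoch q q (p.2.2 : ℤ) *
      qpoch q f ((p.1 : ℤ) + (p.2.1 : ℤ) - (p.2.2 : ℤ))) *
    x ^ p.1 * y ^ p.2.1 * z ^ p.2.2

/-- The integrand of the contour-integral representation of the triple series. -/
noncomputable def integrandF (q a b c e f x y z t : ℂ) : ℂ :=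
  qinf q q * qinf q (f / e) * qinf q (e * t) * qinf q (q / (e * t)) * qinf q (a * x / t) *
      qinf q (b * y / t) * qinf q (c * z * t) /
    (qinf q f * qinf q (q / e) * qinf q t * qinf q (f / (e * t)) * qinf q (x / t) *
      qinf q (y / t) * qinf q (z * t))

open Filter Topology

lemma qq_summ (q u : ℂ) (hq1 : ‖q‖ < 1) : Summable (fun i : ℕ => ‖-(u * q ^ i)‖) := by
  simp only [norm_neg, norm_mul, norm_pow]
  exact (summable_geometric_of_lt_one (norm_nonneg _) hq1).mul_left _

lemma qinf_mult (q u : ℂ) (hq1 : ‖q‖ < 1) : Multipliable (fun i : ℕ => (1 - u * q ^ i)) := by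
  simpa [sub_eq_add_neg] using multipliable_one_add_of_summable (qq_summ q u hq1)

lemma qinf_step (q u : ℂ) (hq1 : ‖q‖ < 1) : qinf q u = (1 - u) * qinf q (u * q) := by
  unfold qinf
  have h : (fun i : ℕ => 1 - u * q ^ (i + 1)) = (fun i : ℕ => 1 - u * q * q ^ i) := by
    funext i; rw [pow_succ']; ring
  have hm : Multipliable (fun i : ℕ => 1 - u * q ^ (i + 1)) := by
    rw [h]; exact qinf_mult q (u * q) hq1
  have h2 := tprod_eq_zero_mul' (f := fun i : ℕ => 1 - u * q ^ i) hm
  rw [h2, h, pow_zero, mul_one]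

lemma qinf_ne_zero (q u : ℂ) (hq1 : ‖q‖ < 1) (h : ∀ i : ℕ, u * q ^ i ≠ 1) : qinf q u ≠ 0 := by
  unfold qinf
  have := tprod_one_add_ne_zero_of_summable (f := fun i : ℕ => -(u * q ^ i))
    (fun i => by rw [← sub_eq_add_neg]; exact sub_ne_zero.2 (h i).symm) (qq_summ q u hq1)
  simpa [sub_eq_add_neg] using this

lemma qinf_ne_zero_of_lt (q u : ℂ) (hq1 : ‖q‖ < 1) (h : ‖u‖ < 1) : qinf q u ≠ 0 := by
  apply qinf_ne_zero q u hq1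
  intro i hi
  have h1 : ‖u * q ^ i‖ = 1 := by rw [hi]; simp
  rw [norm_mul, norm_pow] at h1
  have h2 : ‖q‖ ^ i ≤ 1 := pow_le_one₀ (norm_nonneg _) hq1.le
  nlinarith [norm_nonneg u]

lemma qinf_zero (q : ℂ) : qinf q 0 = 1 := by simp [qinf]

lemma qinf_tendsto_prod (q u : ℂ) (hq1 : ‖q‖ < 1) :
    Tendsto (fun N => ∏ i ∈ Finset.range N, (1 - u * q ^ i)) atTop (𝓝 (qinf q u)) :=
  (qinf_mult q u hq1).hasProd.tendsto_prod_nat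

lemma qinf_tendsto (q u : ℂ) (hq1 : ‖q‖ < 1) :
    Tendsto (fun N : ℕ => qinf q (u * q ^ N)) atTop (𝓝 1) := by
  have hb : ∀ v : ℂ, ‖qinf q v - 1‖ ≤ Real.exp (‖v‖ * (1 - ‖q‖)⁻¹) - 1 := by
    intro v
    refine le_of_tendsto ((qinf_tendsto_prod q v hq1).sub_const 1).norm (Eventually.of_forall ?_)
    intro N
    have := Finset.norm_prod_one_add_sub_one_le (Finset.range N) (fun i => -(v * q ^ i))
    simp only [← sub_eq_add_neg] at this
    refine this.trans ?_
    gcongr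
    simp only [norm_neg, norm_mul, norm_pow, ← Finset.mul_sum]
    gcongr
    rw [← tsum_geometric_of_lt_one (norm_nonneg _) hq1]
    exact (summable_geometric_of_lt_one (norm_nonneg _) hq1).sum_le_tsum _
      (fun i _ => by positivity)
  rw [tendsto_iff_norm_sub_tendsto_zero]
  refine squeeze_zero (fun _ => norm_nonneg _) (fun N => hb (u * q ^ N)) ?_
  have h1 : Tendsto (fun N : ℕ => ‖u * q ^ N‖) atTop (𝓝 0) := by
    have := ((tendsto_pow_atTop_nhds_zero_of_norm_lt_one hq1).const_mul u).norm
    simpa using this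
  have h2 := (Real.continuous_exp.tendsto _).comp (h1.mul_const ((1 - ‖q‖)⁻¹))
  have := h2.sub_const 1
  simpa using this

lemma qinf_bound (q u : ℂ) (s : ℝ) (hq1 : ‖q‖ < 1) (hu : ‖u‖ ≤ s) :
    ‖qinf q u‖ ≤ ‖qinf (‖q‖ : ℂ) (-(s : ℂ))‖ := by
  have hq1' : ‖(‖q‖ : ℂ)‖ < 1 := by simpa using hq1
  refine le_of_tendsto_of_tendsto (qinf_tendsto_prod q u hq1).norm
    (qinf_tendsto_prod _ (-(s : ℂ)) hq1').norm (Eventually.of_forall fun N => ?_)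
  simp only [norm_prod]
  refine Finset.prod_le_prod (fun _ _ => norm_nonneg _) (fun i _ => ?_)
  have hs : 0 ≤ s := (norm_nonneg _).trans hu
  have e1 : (1 - -(s : ℂ) * (‖q‖ : ℂ) ^ i) = ((1 + s * ‖q‖ ^ i : ℝ) : ℂ) := by push_cast; ring
  rw [e1, Complex.norm_real, Real.norm_of_nonneg (by positivity)]
  refine (norm_sub_le _ _).trans ?_
  simp only [norm_one, norm_mul, norm_pow]
  gcongr

lemma D_step (q : ℂ) (s : ℝ) (hq1 : ‖q‖ < 1) (hs : 0 ≤ s) :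
    ‖qinf (‖q‖ : ℂ) (-(s : ℂ))‖ = (1 + s) * ‖qinf (‖q‖ : ℂ) (-((s * ‖q‖ : ℝ) : ℂ))‖ := by
  have hq1' : ‖(‖q‖ : ℂ)‖ < 1 := by simpa using hq1
  rw [qinf_step _ _ hq1', norm_mul]
  have e1 : (1 - -(s : ℂ)) = ((1 + s : ℝ) : ℂ) := by push_cast; ring
  rw [e1, Complex.norm_real, Real.norm_of_nonneg (by positivity)]
  congr 3
  push_cast; ring

lemma summ_ratio (u ρ : ℕ → ℝ) (l : ℝ) (hu : ∀ n, 0 ≤ u n) (h : ∀ n, u (n + 1) = ρ n * u n)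
    (hρ : Tendsto ρ atTop (𝓝 l)) (hl : l < 1) : Summable u := by
  obtain ⟨r, hr, hr1⟩ := exists_between hl
  refine summable_of_ratio_norm_eventually_le hr1 ?_
  filter_upwards [hρ.eventually_le_const hr] with n hn
  rw [Real.norm_of_nonneg (hu _), Real.norm_of_nonneg (hu _), h]
  exact mul_le_mul_of_nonneg_right hn (hu n)

/-! finite q-shifted factorials -/

lemma qpoch_zero (q a : ℂ) : qpoch q a 0 = 1 := by simp [qpoch]

lemma qpoch_nat (q a : ℂ) (n : ℕ) : qpoch q a n = ∏ i ∈ Finset.range n, (1 - a * q ^ i) := by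
  simp [qpoch]

lemma qpoch_nat_succ (q a : ℂ) (n : ℕ) :
    qpoch q a ((n : ℤ) + 1) = (1 - a * q ^ n) * qpoch q a n := by
  have := qpoch_nat q a (n + 1)
  push_cast at this
  rw [this, Finset.prod_range_succ, qpoch_nat, mul_comm]

lemma qpoch_neg (q a : ℂ) (n : ℕ) :
    qpoch q a (-(n : ℤ)) = (∏ i ∈ Finset.range n, (1 - a * q ^ (-(i : ℤ) - 1)))⁻¹ := by
  rcases Nat.eq_zero_or_pos n with rfl | hn
  · simp [qpoch]
  · have h : ¬ (0 ≤ -(n : ℤ)) := by omega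
    simp only [qpoch, h, if_false, neg_neg, Int.toNat_natCast]
    congr 1
    rw [← Finset.prod_range_reflect]
    refine Finset.prod_congr rfl fun i hi => ?_
    rw [Finset.mem_range] at hi
    congr 3
    omega

lemma qpoch_succ (q a : ℂ) (hq : q ≠ 0) (ha : ∀ n : ℕ, 1 ≤ n → a ≠ q ^ n) (n : ℤ) :
    qpoch q a (n + 1) = (1 - a * q ^ n) * qpoch q a n := by
  rcases Int.eq_nat_or_neg n with ⟨m, rfl | rfl⟩
  · simpa using qpoch_nat_succ q a m
  · rcases m with _ | m
    · simpa using qpoch_nat_succ q a 0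
    · have : (-((m + 1 : ℕ) : ℤ) + 1) = -(m : ℤ) := by push_cast; ring
      rw [this, qpoch_neg, qpoch_neg, Finset.prod_range_succ]
      have e : (-((m + 1 : ℕ) : ℤ)) = -(m : ℤ) - 1 := by push_cast; ring
      have h1 : (1 - a * q ^ (-(m : ℤ) - 1)) ≠ 0 := by
        intro h0
        apply ha (m + 1) (by omega)
        have : a * q ^ (-(m : ℤ) - 1) = 1 := (sub_eq_zero.1 h0).symm
        rw [← e, zpow_neg, zpow_natCast, ← div_eq_mul_inv, div_eq_one_iff_eq (by positivity)] at this
        exact this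
      rw [e, mul_inv]
      field_simp

lemma qpoch_ne_zero (q a : ℂ) (hq : q ≠ 0) (ha : ∀ n : ℤ, a ≠ q ^ n) (n : ℤ) :
    qpoch q a n ≠ 0 := by
  have key : ∀ m : ℤ, 1 - a * q ^ m ≠ 0 := by
    intro m h0
    apply ha (-m)
    rw [zpow_neg]
    exact eq_inv_of_mul_eq_one_left (sub_eq_zero.1 h0).symm
  unfold qpoch
  split_ifs
  · exact Finset.prod_ne_zero_iff.2 fun i _ => key _
  · exact inv_ne_zero (Finset.prod_ne_zero_iff.2 fun i _ => key _)

lemma qpoch_self_ne_zero (q : ℂ) (hq : q ≠ 0) (hq1 : ‖q‖ < 1) (n : ℕ) : qpoch q q n ≠ 0 := by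
  rw [qpoch_nat]
  refine Finset.prod_ne_zero_iff.2 fun i _ => sub_ne_zero.2 fun h => ?_
  have : ‖q ^ (i + 1)‖ = 1 := by rw [pow_succ', ← h]; simp
  rw [norm_pow] at this
  have := pow_lt_one₀ (norm_nonneg q) hq1 (n := i + 1) (by omega)
  linarith

lemma int_rec (u v g : ℤ → ℂ) (hg : ∀ n < 0, g n ≠ 0) (h0 : u 0 = v 0) (hu : ∀ n, u (n + 1) = g n * u n)
    (hv : ∀ n, v (n + 1) = g n * v n) (n : ℤ) : u n = v n := by
  induction n using Int.induction_on with
  | zero => exact h0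
  | succ n ih => rw [hu, hv, ih]
  | pred n ih =>
    have h1 := hu (-(n : ℤ) - 1)
    have h2 := hv (-(n : ℤ) - 1)
    rw [sub_add_cancel] at h1 h2
    exact mul_left_cancel₀ (hg (-(n : ℤ) - 1) (by omega)) (by rw [← h1, ← h2, ih])

lemma pow_ne_one_q (q : ℂ) (hq1 : ‖q‖ < 1) (n : ℕ) : 1 - q * q ^ n ≠ 0 := by
  refine sub_ne_zero.2 fun h => ?_
  have : ‖q ^ (n + 1)‖ = 1 := by rw [pow_succ', ← h]; simp
  rw [norm_pow] at this
  have := pow_lt_one₀ (norm_nonneg q) hq1 (n := n + 1) (by omega)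
  linarith

lemma tendsto_one_sub (q a : ℂ) (hq1 : ‖q‖ < 1) :
    Tendsto (fun n : ℕ => 1 - a * q ^ n) atTop (𝓝 1) := by
  have := ((tendsto_pow_atTop_nhds_zero_of_norm_lt_one hq1).const_mul a).const_sub 1
  simpa using this

lemma qbin_coeff (q a : ℂ) (hq1 : ‖q‖ < 1) (n : ℕ) :
    qpoch q a ((n + 1 : ℕ) : ℤ) / qpoch q q ((n + 1 : ℕ) : ℤ) =
      (1 - a * q ^ n) / (1 - q * q ^ n) * (qpoch q a n / qpoch q q n) := by
  push_cast
  rw [qpoch_nat_succ, qpoch_nat_succ, mul_div_mul_comm]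

lemma qbin_summable (q a x : ℂ) (hq1 : ‖q‖ < 1) (hx : ‖x‖ < 1) :
    Summable (fun n : ℕ => ‖qpoch q a n / qpoch q q n * x ^ n‖) := by
  refine summ_ratio _ (fun n => ‖(1 - a * q ^ n) / (1 - q * q ^ n) * x‖) ‖x‖
    (fun n => norm_nonneg _) (fun n => ?_) ?_ hx
  · rw [← norm_mul, qbin_coeff q a hq1, pow_succ']
    congr 1; ring
  · have := (((tendsto_one_sub q a hq1).div (tendsto_one_sub q q hq1) one_ne_zero).mul_const x).norm
    simpa using this

lemma qbin_step (q a x : ℂ) (hq1 : ‖q‖ < 1) (hx : ‖x‖ < 1) :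
    (1 - x) * ∑' n : ℕ, qpoch q a n / qpoch q q n * x ^ n =
      (1 - a * x) * ∑' n : ℕ, qpoch q a n / qpoch q q n * (x * q) ^ n := by
  have hxq : ‖x * q‖ < 1 := by
    rw [norm_mul]; nlinarith [norm_nonneg x, norm_nonneg q]
  set c : ℕ → ℂ := fun n => qpoch q a n / qpoch q q n with hc
  have s1 : Summable (fun n => c n * x ^ n) := (qbin_summable q a x hq1 hx).of_norm
  have s2 : Summable (fun n => c n * (x * q) ^ n) := (qbin_summable q a _ hq1 hxq).of_norm
  have h1 : ∑' n, c n * x ^ n - ∑' n, c n * (x * q) ^ n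
      = x * ∑' n, c n * x ^ n - a * x * ∑' n, c n * (x * q) ^ n := by
    rw [← s1.tsum_sub s2, (s1.sub s2).tsum_eq_zero_add, ← tsum_mul_left, ← tsum_mul_left,
      ← (s1.mul_left x).tsum_sub (s2.mul_left (a * x))]
    simp only [pow_zero, sub_self, zero_add]
    refine tsum_congr fun n => ?_
    have h2 : c (n + 1) = (1 - a * q ^ n) / (1 - q * q ^ n) * c n := qbin_coeff q a hq1 n
    have h3 := pow_ne_one_q q hq1 n
    have h4 : c (n + 1) * (1 - q * q ^ n) = (1 - a * q ^ n) * c n := by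
      rw [h2, mul_right_comm, div_mul_cancel₀ _ h3]
    rw [mul_pow, mul_pow]
    linear_combination x ^ (n + 1) * h4
  linear_combination h1

lemma qbin (q a x : ℂ) (hq1 : ‖q‖ < 1) (hx : ‖x‖ < 1) :
    ∑' n : ℕ, qpoch q a n / qpoch q q n * x ^ n = qinf q (a * x) / qinf q x := by
  set S : ℂ → ℂ := fun x => ∑' n : ℕ, qpoch q a n / qpoch q q n * x ^ n with hS
  have hqN : ∀ N : ℕ, ‖x * q ^ N‖ ≤ ‖x‖ := by
    intro N
    rw [norm_mul, norm_pow]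
    exact mul_le_of_le_one_right (norm_nonneg _) (pow_le_one₀ (norm_nonneg _) hq1.le)
  have it : ∀ N : ℕ, (∏ i ∈ Finset.range N, (1 - x * q ^ i)) * S x =
      (∏ i ∈ Finset.range N, (1 - a * x * q ^ i)) * S (x * q ^ N) := by
    intro N
    induction N with
    | zero => simp
    | succ N ih =>
      have := qbin_step q a (x * q ^ N) hq1 ((hqN N).trans_lt hx)
      rw [Finset.prod_range_succ, Finset.prod_range_succ]
      rw [mul_assoc x, ← pow_succ] at this
      change (1 - x * q ^ N) * S (x * q ^ N) = (1 - a * (x * q ^ N)) * S (x * q ^ (N + 1)) at this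
      linear_combination (1 - x * q ^ N) * ih + (∏ i ∈ Finset.range N, (1 - a * x * q ^ i)) * this
  have lim : Tendsto (fun N : ℕ => S (x * q ^ N)) atTop (𝓝 1) := by
    have h1 : (1 : ℂ) = ∑' n : ℕ, qpoch q a n / qpoch q q n * 0 ^ n := by
      rw [tsum_eq_single 0]
      · simp [qpoch_zero]
      · intro n hn; simp [hn]
    rw [h1]
    refine tendsto_tsum_of_dominated_convergence (qbin_summable q a x hq1 hx) (fun n => ?_)
      (Eventually.of_forall fun N n => ?_)
    · refine Tendsto.const_mul _ (Tendsto.pow ?_ n)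
      simpa using (tendsto_pow_atTop_nhds_zero_of_norm_lt_one hq1).const_mul x
    · rw [norm_mul, norm_mul, norm_pow, norm_pow x]
      gcongr
      exact hqN N
  have l1 := (qinf_tendsto_prod q x hq1).mul_const (S x)
  have l2 := (qinf_tendsto_prod q (a * x) hq1).mul lim
  have := tendsto_nhds_unique l1 (by simpa only [it] using l2)
  rw [eq_div_iff (qinf_ne_zero_of_lt q x hq1 hx)]
  linear_combination this

/-! bilateral series -/

lemma ne_shift (q e : ℂ) (hq : q ≠ 0) (he : ∀ n : ℕ, 1 ≤ n → e ≠ q ^ n) (n : ℤ) (hn : n < 0) :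
    1 - e * q ^ n ≠ 0 := by
  intro h0
  obtain ⟨m, rfl⟩ : ∃ m : ℕ, n = -(m : ℤ) := ⟨n.natAbs, by omega⟩
  apply he m (by omega)
  have : e * q ^ (-(m : ℤ)) = 1 := (sub_eq_zero.1 h0).symm
  rw [zpow_neg, zpow_natCast, ← div_eq_mul_inv, div_eq_one_iff_eq (pow_ne_zero _ hq)] at this
  exact this

noncomputable def bdB (q e f t : ℂ) (n : ℤ) : ℝ :=
  ‖qpoch q e n‖ * ‖qinf (‖q‖ : ℂ) (-((‖f‖ * ‖q‖ ^ n : ℝ) : ℂ))‖ * ‖t‖ ^ n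

lemma bdB_succ (q e f t : ℂ) (hq : q ≠ 0) (hq1 : ‖q‖ < 1) (ht : t ≠ 0)
    (heq : ∀ n : ℕ, 1 ≤ n → e ≠ q ^ n) (n : ℤ) :
    bdB q e f t (n + 1) * (1 + ‖f‖ * ‖q‖ ^ n) = ‖1 - e * q ^ n‖ * ‖t‖ * bdB q e f t n := by
  have hq' : ‖q‖ ≠ 0 := norm_ne_zero_iff.2 hq
  have ht' : ‖t‖ ≠ 0 := norm_ne_zero_iff.2 ht
  unfold bdB
  rw [D_step q (‖f‖ * ‖q‖ ^ n) hq1 (by positivity), qpoch_succ q e hq heq, norm_mul,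
    zpow_add_one₀ hq', zpow_add_one₀ ht', mul_assoc ‖f‖]
  ring

lemma bdB_summable (q e f t : ℂ) (hq : q ≠ 0) (hq1 : ‖q‖ < 1) (he : e ≠ 0)
    (heq : ∀ n : ℕ, 1 ≤ n → e ≠ q ^ n) (ht0 : t ≠ 0) (ht : ‖t‖ < 1) (hf : ‖f‖ < ‖e * t‖) :
    Summable (bdB q e f t) := by
  have hnn : ∀ n, 0 ≤ bdB q e f t n := fun n => by unfold bdB; positivity
  have hq' : 0 < ‖q‖ := norm_pos_iff.2 hq
  have ht' : 0 < ‖t‖ := norm_pos_iff.2 ht0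
  have hpow : Tendsto (fun n : ℕ => ‖q‖ ^ n) atTop (𝓝 0) :=
    tendsto_pow_atTop_nhds_zero_of_lt_one (norm_nonneg _) hq1
  refine Summable.of_nat_of_neg ?_ ?_
  · refine summ_ratio _ (fun n : ℕ => ‖1 - e * q ^ n‖ * ‖t‖ / (1 + ‖f‖ * ‖q‖ ^ n)) ‖t‖
      (fun n => hnn _) (fun n => ?_) ?_ ht
    · have := bdB_succ q e f t hq hq1 ht0 heq n
      simp only [zpow_natCast] at this
      push_cast
      have h2 : 0 < 1 + ‖f‖ * ‖q‖ ^ n := by positivity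
      field_simp
      linear_combination this
    · have h1 := ((tendsto_one_sub q e hq1).norm.mul_const ‖t‖).div
        ((hpow.const_mul ‖f‖).const_add 1) (by simp)
      simpa [Pi.div_def] using h1
  · refine summ_ratio _ (fun n : ℕ => (‖q‖ ^ (n + 1) + ‖f‖) / (‖q ^ (n + 1) - e‖ * ‖t‖))
      (‖f‖ / ‖e * t‖) (fun n => hnn _) (fun n => ?_) ?_ ?_
    · have h := bdB_succ q e f t hq hq1 ht0 heq (-((n + 1 : ℕ) : ℤ))
      have h3 : (-((n + 1 : ℕ) : ℤ) + 1) = -(n : ℤ) := by push_cast; ring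
      have h4 := ne_shift q e hq heq (-((n + 1 : ℕ) : ℤ)) (by push_cast; omega)
      have h5 : q ^ (n + 1) - e = q ^ (n + 1) * (1 - e * q ^ (-((n + 1 : ℕ) : ℤ))) := by
        rw [zpow_neg, zpow_natCast]; field_simp
      have h6 : 0 < ‖1 - e * q ^ (-((n + 1 : ℕ) : ℤ))‖ := norm_pos_iff.2 h4
      have h7 : ‖q‖ ^ (n + 1) + ‖f‖ = ‖q‖ ^ (n + 1) * (1 + ‖f‖ * ‖q‖ ^ (-((n + 1 : ℕ) : ℤ))) := by
        rw [zpow_neg, zpow_natCast]; field_simp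
      rw [h3] at h
      rw [h5, norm_mul, h7, norm_pow, div_mul_eq_mul_div, eq_div_iff (by positivity)]
      linear_combination (-‖q‖ ^ (n + 1)) * h
    · have h1 : Tendsto (fun n : ℕ => q ^ (n + 1)) atTop (𝓝 0) :=
        (tendsto_pow_atTop_nhds_zero_of_norm_lt_one hq1).comp (tendsto_add_atTop_nat 1)
      have h2 := ((hpow.comp (tendsto_add_atTop_nat 1)).add_const ‖f‖).div
        ((h1.sub_const e).norm.mul_const ‖t‖) (by simp [he, ht0])
      simpa [norm_mul, Pi.div_def] using h2
    · rw [div_lt_one (lt_of_le_of_lt (norm_nonneg _) hf)]; exact hf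

noncomputable def hT (q e f t : ℂ) (n : ℤ) : ℂ := qpoch q e n * qinf q (f * q ^ n) * t ^ n

lemma hT_le (q e f t : ℂ) (hq1 : ‖q‖ < 1) (N : ℕ) (n : ℤ) :
    ‖hT q e (f * q ^ N) t n‖ ≤ bdB q e f t n := by
  unfold hT bdB
  rw [norm_mul, norm_mul, norm_zpow]
  gcongr
  apply qinf_bound q _ _ hq1
  rw [norm_mul, norm_mul, norm_pow, norm_zpow]
  gcongr
  exact mul_le_of_le_one_right (norm_nonneg _) (pow_le_one₀ (norm_nonneg _) hq1.le)

lemma hT_summable (q e f t : ℂ) (hq : q ≠ 0) (hq1 : ‖q‖ < 1) (he : e ≠ 0)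
    (heq : ∀ n : ℕ, 1 ≤ n → e ≠ q ^ n) (ht0 : t ≠ 0) (ht : ‖t‖ < 1) (hf : ‖f‖ < ‖e * t‖) :
    Summable (fun n => ‖hT q e f t n‖) := by
  refine Summable.of_nonneg_of_le (fun _ => norm_nonneg _) (fun n => ?_)
    (bdB_summable q e f t hq hq1 he heq ht0 ht hf)
  simpa using hT_le q e f t hq1 0 n

lemma hT_step (q e f t : ℂ) (hq : q ≠ 0) (hq1 : ‖q‖ < 1) (he : e ≠ 0)
    (heq : ∀ n : ℕ, 1 ≤ n → e ≠ q ^ n) (ht0 : t ≠ 0) (ht : ‖t‖ < 1) (hf : ‖f‖ < ‖e * t‖) :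
    (1 - f / (e * t)) * ∑' n, hT q e f t n = (1 - f / e) * ∑' n, hT q e (f * q) t n := by
  have s1 := (hT_summable q e f t hq hq1 he heq ht0 ht hf).of_norm
  have s2 : Summable (fun n => hT q e f t (n + 1)) :=
    s1.comp_injective (add_left_injective (1 : ℤ))
  have e2 : ∑' n, hT q e f t (n + 1) = ∑' n, hT q e f t n :=
    (Equiv.addRight (1 : ℤ)).tsum_eq (hT q e f t)
  rw [sub_mul, one_mul]
  nth_rewrite 2 [← e2]
  rw [← tsum_mul_left, ← tsum_mul_left, ← s1.tsum_sub (s2.mul_left _)]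
  refine tsum_congr fun n => ?_
  have k1 : qinf q (f * q ^ n) = (1 - f * q ^ n) * qinf q (f * q * q ^ n) := by
    rw [qinf_step q (f * q ^ n) hq1, show f * q ^ n * q = f * q * q ^ n by ring]
  have k2 : f * q ^ (n + 1) = f * q * q ^ n := by rw [zpow_add_one₀ hq]; ring
  have k3 : f / (e * t) * t = f / e := by field_simp
  have k4 : f / e * e = f := by field_simp
  simp only [hT]
  rw [qpoch_succ q e hq heq, k1, k2, zpow_add_one₀ ht0]
  generalize qinf q (f * q * q ^ n) = Q
  generalize qpoch q e n = P
  generalize t ^ n = T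
  generalize q ^ n = R
  linear_combination (-(1 - e * R) * P * Q * T) * k3 + (R * P * Q * T) * k4

lemma hT_iter (q e f t : ℂ) (hq : q ≠ 0) (hq1 : ‖q‖ < 1) (he : e ≠ 0)
    (heq : ∀ n : ℕ, 1 ≤ n → e ≠ q ^ n) (ht0 : t ≠ 0) (ht : ‖t‖ < 1) (hf : ‖f‖ < ‖e * t‖) :
    qinf q (f / (e * t)) * ∑' n, hT q e f t n = qinf q (f / e) * ∑' n, hT q e 0 t n := by
  have it : ∀ N : ℕ, (∏ i ∈ Finset.range N, (1 - f / (e * t) * q ^ i)) * ∑' n, hT q e f t n =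
      (∏ i ∈ Finset.range N, (1 - f / e * q ^ i)) * ∑' n, hT q e (f * q ^ N) t n := by
    intro N
    induction N with
    | zero => simp
    | succ N ih =>
      have hN : ‖f * q ^ N‖ < ‖e * t‖ := by
        refine lt_of_le_of_lt ?_ hf
        rw [norm_mul, norm_pow]
        exact mul_le_of_le_one_right (norm_nonneg _) (pow_le_one₀ (norm_nonneg _) hq1.le)
      have := hT_step q e (f * q ^ N) t hq hq1 he heq ht0 ht hN
      rw [mul_assoc f, ← pow_succ] at this
      rw [Finset.prod_range_succ, Finset.prod_range_succ]
      rw [mul_div_right_comm, mul_div_right_comm] at this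
      linear_combination (1 - f / (e * t) * q ^ N) * ih +
        (∏ i ∈ Finset.range N, (1 - f / e * q ^ i)) * this
  have lim : Tendsto (fun N : ℕ => ∑' n, hT q e (f * q ^ N) t n) atTop
      (𝓝 (∑' n, hT q e 0 t n)) := by
    refine tendsto_tsum_of_dominated_convergence
      (bdB_summable q e f t hq hq1 he heq ht0 ht hf) (fun n => ?_)
      (Eventually.of_forall fun N n => hT_le q e f t hq1 N n)
    unfold hT
    refine Tendsto.mul_const _ (Tendsto.const_mul _ ?_)
    rw [zero_mul, qinf_zero]
    have := qinf_tendsto q (f * q ^ n) hq1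
    refine this.congr fun N => ?_
    congr 1; ring
  have l1 := (qinf_tendsto_prod q (f / (e * t)) hq1).mul_const (∑' n, hT q e f t n)
  have l2 := (qinf_tendsto_prod q (f / e) hq1).mul lim
  exact tendsto_nhds_unique l1 (by simpa only [it] using l2)

lemma qinf_q_shift (q : ℂ) (hq : q ≠ 0) (hq1 : ‖q‖ < 1) (n : ℕ) :
    qinf q (q * q ^ n) = qinf q q / qpoch q q n := by
  rw [eq_div_iff (qpoch_self_ne_zero q hq hq1 n)]
  induction n with
  | zero => simp [qpoch_zero]
  | succ n ih =>
    push_cast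
    rw [qpoch_nat_succ, ← ih, qinf_step q (q * q ^ n) hq1, pow_succ]
    rw [mul_assoc q]
    ring

lemma hT_base (q e t : ℂ) (hq : q ≠ 0) (hq1 : ‖q‖ < 1) (ht : ‖t‖ < 1) :
    ∑' n, hT q e q t n = qinf q q * (qinf q (e * t) / qinf q t) := by
  have h1 : ∑' n, hT q e q t n = ∑' n : ℕ, hT q e q t n := by
    refine (Function.Injective.tsum_eq (f := hT q e q t) Nat.cast_injective ?_).symm
    intro n hn
    by_contra h
    apply hn
    have hneg : n < 0 := by
      by_contra h2
      exact h ⟨n.toNat, by simp; omega⟩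
    obtain ⟨m, rfl⟩ : ∃ m : ℕ, n = -((m + 1 : ℕ) : ℤ) := ⟨n.natAbs - 1, by omega⟩
    have : qinf q (q * q ^ (-((m + 1 : ℕ) : ℤ))) = 0 := by
      unfold qinf
      refine tprod_of_exists_eq_zero ⟨m, ?_⟩
      rw [zpow_neg, zpow_natCast, pow_succ]
      field_simp
      ring
    simp only [hT, this]; simp
  rw [h1, ← qbin q e t hq1 ht, ← tsum_mul_left]
  refine tsum_congr fun n => ?_
  unfold hT
  rw [zpow_natCast, zpow_natCast, qinf_q_shift q hq hq1]
  ring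

lemma qpoch_e_shift (q e : ℂ) (hq : q ≠ 0) (heq : ∀ n : ℕ, 1 ≤ n → e ≠ q ^ n) (n : ℤ) :
    qpoch q (e / q) (n + 1) = (1 - e / q) * qpoch q e n := by
  have heq' : ∀ n : ℕ, 1 ≤ n → e / q ≠ q ^ n := by
    intro n hn h
    apply heq (n + 1) (by omega)
    rw [pow_succ, ← h]; field_simp
  refine int_rec (fun n => qpoch q (e / q) (n + 1)) (fun n => (1 - e / q) * qpoch q e n)
    (fun n => 1 - e * q ^ n) (fun n hn => ne_shift q e hq heq n hn) ?_ (fun n => ?_) (fun n => ?_) n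
  · have := qpoch_nat_succ q (e / q) 0
    simpa [qpoch_zero] using this
  · rw [qpoch_succ q _ hq heq', zpow_add_one₀ hq]
    congr 2; field_simp
  · simp only [qpoch_succ q e hq heq]; ring

lemma psi_zero (q t : ℂ) (hq : q ≠ 0) (hq1 : ‖q‖ < 1) (ht0 : t ≠ 0) (ht : ‖t‖ < 1) (N : ℕ) :
    ∀ e : ℂ, e ≠ 0 → (∀ n : ℕ, 1 ≤ n → e ≠ q ^ n) → ‖q‖ ^ (N + 1) < ‖e * t‖ →
    qinf q (q / e) * qinf q t * ∑' n, hT q e 0 t n =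
      qinf q q * qinf q (e * t) * qinf q (q / (e * t)) := by
  induction N with
  | zero =>
    intro e he heq h
    rw [zero_add, pow_one] at h
    have h1 := hT_iter q e q t hq hq1 he heq ht0 ht h
    rw [hT_base q e t hq hq1 ht] at h1
    have h2 := qinf_ne_zero_of_lt q t hq1 ht
    have h3 : qinf q q * (qinf q (e * t) / qinf q t) * qinf q t = qinf q q * qinf q (e * t) := by
      field_simp
    linear_combination (-qinf q t) * h1 + qinf q (q / (e * t)) * h3
  | succ N ih =>
    intro e he heq h
    have heq' : ∀ n : ℕ, 1 ≤ n → e / q ≠ q ^ n := by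
      intro n hn h
      apply heq (n + 1) (by omega)
      rw [pow_succ, ← h]; field_simp
    have hqp : 0 < ‖q‖ := norm_pos_iff.2 hq
    have := ih (e / q) (div_ne_zero he hq) heq' (by
      rw [div_mul_eq_mul_div, norm_div, lt_div_iff₀ hqp, ← pow_succ]; exact h)
    have e1 : ∑' n, hT q (e / q) 0 t n = (1 - e / q) * t * ∑' n, hT q e 0 t n := by
      rw [← (Equiv.addRight (1 : ℤ)).tsum_eq (hT q (e / q) 0 t), ← tsum_mul_left]
      refine tsum_congr fun n => ?_
      simp only [hT, Equiv.coe_addRight, zero_mul, qpoch_e_shift q e hq heq, zpow_add_one₀ ht0]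
      ring
    have a1 : qinf q (e / q * t) = (1 - e / q * t) * qinf q (e * t) := by
      rw [qinf_step q (e / q * t) hq1]; congr 2; field_simp
    have a2 : qinf q (q / (e * t)) = (1 - q / (e * t)) * qinf q (q / (e / q * t)) := by
      rw [qinf_step q (q / (e * t)) hq1]; congr 2; field_simp
    have a3 : qinf q (q / e) = (1 - q / e) * qinf q (q / (e / q)) := by
      rw [qinf_step q (q / e) hq1]; congr 2; field_simp
    rw [e1, a1] at this
    rw [a2, a3]
    have hne : (1 - e / q) * t ≠ 0 := by
      refine mul_ne_zero (sub_ne_zero.2 fun h => heq 1 le_rfl ?_) ht0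
      field_simp at h; simpa using h.symm
    have k1 : -(q / e) * (1 - e / q) = 1 - q / e := by field_simp; ring
    have k2 : -(q / (e * t)) * (1 - e / q * t) = 1 - q / (e * t) := by field_simp; ring
    rw [← k1, ← k2]
    have k3 : q / (e * t) * t = q / e := by field_simp
    linear_combination (-(q / (e * t))) * this + (-(qinf q (q / (e / q)) * qinf q t * ∑' n, hT q e 0 t n) * (1 - e / q)) * (-k3)

lemma qinf_split (q f : ℂ) (hq : q ≠ 0) (hq1 : ‖q‖ < 1) (hf : ∀ n : ℤ, f ≠ q ^ n) (n : ℤ) :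
    qpoch q f n * qinf q (f * q ^ n) = qinf q f := by
  have hf1 : ∀ n : ℕ, 1 ≤ n → f ≠ q ^ n := fun n _ => by simpa using hf n
  refine int_rec (fun n => qpoch q f n * qinf q (f * q ^ n)) (fun _ => qinf q f) (fun _ => 1)
    (fun _ _ => one_ne_zero) ?_ (fun n => ?_) (fun n => ?_) n
  · simp [qpoch_zero]
  · rw [qpoch_succ q f hq hf1, qinf_step q (f * q ^ n) hq1, zpow_add_one₀ hq, mul_assoc f]
    ring
  · simp

lemma psi_term (q e f t : ℂ) (hq : q ≠ 0) (hq1 : ‖q‖ < 1) (hf : ∀ n : ℤ, f ≠ q ^ n)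
    (hqf : qinf q f ≠ 0) (n : ℤ) :
    qpoch q e n / qpoch q f n * t ^ n = (qinf q f)⁻¹ * hT q e f t n := by
  have h1 := qinf_split q f hq hq1 hf n
  have h2 := qpoch_ne_zero q f hq hf n
  unfold hT
  rw [← h1] at hqf ⊢
  have h3 := right_ne_zero_of_mul hqf
  field_simp

lemma psi_summable (q e f t : ℂ) (hq : q ≠ 0) (hq1 : ‖q‖ < 1) (he : e ≠ 0)
    (heq : ∀ n : ℕ, 1 ≤ n → e ≠ q ^ n) (hf : ∀ n : ℤ, f ≠ q ^ n) (hqf : qinf q f ≠ 0)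
    (ht0 : t ≠ 0) (ht : ‖t‖ < 1) (hft : ‖f‖ < ‖e * t‖) :
    Summable (fun n : ℤ => ‖qpoch q e n / qpoch q f n * t ^ n‖) := by
  simp only [psi_term q e f t hq hq1 hf hqf, norm_mul (qinf q f)⁻¹]
  exact (hT_summable q e f t hq hq1 he heq ht0 ht hft).mul_left _

lemma psi_sum (q e f t : ℂ) (hq : q ≠ 0) (hq1 : ‖q‖ < 1) (he : e ≠ 0)
    (heq : ∀ n : ℕ, 1 ≤ n → e ≠ q ^ n) (hf : ∀ n : ℤ, f ≠ q ^ n) (hqf : qinf q f ≠ 0)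
    (ht0 : t ≠ 0) (ht : ‖t‖ < 1) (hft : ‖f‖ < ‖e * t‖) :
    ∑' n : ℤ, qpoch q e n / qpoch q f n * t ^ n =
      qinf q q * qinf q (f / e) * qinf q (e * t) * qinf q (q / (e * t)) /
      (qinf q f * qinf q (q / e) * qinf q t * qinf q (f / (e * t))) := by
  simp only [psi_term q e f t hq hq1 hf hqf]
  rw [tsum_mul_left]
  have h1 := hT_iter q e f t hq hq1 he heq ht0 ht hft
  obtain ⟨N, hN⟩ := exists_pow_lt_of_lt_one (lt_of_le_of_lt (norm_nonneg _) hft) hq1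
  have hN' : ‖q‖ ^ (N + 1) < ‖e * t‖ :=
    lt_of_le_of_lt (pow_le_pow_of_le_one (norm_nonneg _) hq1.le (Nat.le_succ N)) hN
  have h2 := psi_zero q t hq hq1 ht0 ht N e he heq hN'
  have n1 := qinf_ne_zero_of_lt q t hq1 ht
  have n2 : qinf q (q / e) ≠ 0 := by
    refine qinf_ne_zero q _ hq1 fun i hi => heq (i + 1) (by omega) ?_
    field_simp at hi
    rw [pow_succ']; exact hi.symm
  have n3 : qinf q (f / (e * t)) ≠ 0 := by
    refine qinf_ne_zero_of_lt q _ hq1 ?_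
    rw [norm_div, div_lt_one (lt_of_le_of_lt (norm_nonneg _) hft)]; exact hft
  rw [eq_div_iff (by positivity), inv_mul_eq_div, div_mul_eq_mul_div, div_eq_iff hqf]
  linear_combination (qinf q f * qinf q (q / e) * qinf q t) * h1 + (qinf q f * qinf q (f / e)) * h2

noncomputable def wT (q a b c e f x y z t : ℂ) (p : ℤ × ℕ × ℕ × ℕ) : ℂ :=
  (qpoch q e p.1 / qpoch q f p.1 * t ^ p.1) *
    ((qpoch q a p.2.1 / qpoch q q p.2.1 * (x / t) ^ p.2.1) *
      ((qpoch q b p.2.2.1 / qpoch q q p.2.2.1 * (y / t) ^ p.2.2.1) *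
        (qpoch q c p.2.2.2 / qpoch q q p.2.2.2 * (z * t) ^ p.2.2.2)))

noncomputable def wC (q a b c e f x y z : ℂ) (p : ℤ × ℕ × ℕ × ℕ) : ℂ :=
  (qpoch q e p.1 / qpoch q f p.1) *
    ((qpoch q a p.2.1 / qpoch q q p.2.1 * x ^ p.2.1) *
      ((qpoch q b p.2.2.1 / qpoch q q p.2.2.1 * y ^ p.2.2.1) *
        (qpoch q c p.2.2.2 / qpoch q q p.2.2.2 * z ^ p.2.2.2)))

def wE (p : ℤ × ℕ × ℕ × ℕ) : ℤ := p.1 - p.2.1 - p.2.2.1 + p.2.2.2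

lemma wT_eq (q a b c e f x y z t : ℂ) (ht : t ≠ 0) (p : ℤ × ℕ × ℕ × ℕ) :
    wT q a b c e f x y z t p = wC q a b c e f x y z p * t ^ wE p := by
  obtain ⟨n, j, k, m⟩ := p
  simp only [wT, wC, wE]
  rw [zpow_add₀ ht, zpow_sub₀ ht, zpow_sub₀ ht, zpow_natCast, zpow_natCast, zpow_natCast,
    div_pow, div_pow, mul_pow]
  ring

def gI (p : ℕ × ℕ × ℕ) : ℤ × ℕ × ℕ × ℕ := ((p.1 : ℤ) + p.2.1 - p.2.2, p)

lemma gI_inj : Function.Injective gI := fun p p' h => (Prod.ext_iff.1 h).2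

lemma wC_gI (q a b c e f x y z : ℂ) (p : ℕ × ℕ × ℕ) :
    wC q a b c e f x y z (gI p) = tripleTerm q a b c e f x y z p := by
  obtain ⟨j, k, m⟩ := p
  simp only [wC, gI, tripleTerm]
  simp only [div_eq_mul_inv, mul_inv]
  ring

lemma wE_gI (p : ℕ × ℕ × ℕ) : wE (gI p) = 0 := by
  simp only [wE, gI]; ring

lemma wE_ne (p : ℤ × ℕ × ℕ × ℕ) (h : p ∉ Set.range gI) : wE p ≠ 0 := by
  intro h0
  apply h
  obtain ⟨n, j, k, m⟩ := p
  refine ⟨(j, k, m), ?_⟩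
  simp only [wE] at h0
  simp only [gI, Prod.mk.injEq, and_true]
  omega

lemma circle_zpow (r : ℝ) (hr : 0 < r) (C : ℂ) (l : ℤ) :
    (∮ t in C(0, r), C * t ^ l / t) = if l = 0 then C * (2 * Real.pi * Complex.I) else 0 := by
  have h1 : (∮ t in C(0, r), C * t ^ l / t) = C * ∮ t in C(0, r), (t - 0) ^ (l - 1) := by
    rw [← circleIntegral.integral_const_mul]
    refine circleIntegral.integral_congr hr.le fun t ht => ?_
    have : t ≠ 0 := by
      rintro rfl
      simp at ht; linarith
    simp only [sub_zero]
    rw [zpow_sub_one₀ this]; ring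
  rw [h1]
  split_ifs with h
  · subst h
    have := circleIntegral.integral_sub_center_inv 0 hr.ne'
    rw [← this]
    simp
  · rw [circleIntegral.integral_sub_zpow_of_ne (by omega), mul_zero]

theorem main_aux (q a b c e f x y z : ℂ) (r : ℝ)
    (hq0 : 0 < ‖q‖) (hq1 : ‖q‖ < 1) (he : e ≠ 0)
    (heq : ∀ n : ℕ, 1 ≤ n → e ≠ q ^ n)
    (hfq : ∀ n : ℕ, 1 ≤ n → f ≠ q ^ n)
    (hfq' : ∀ n : ℕ, f ≠ q ^ (-(n : ℤ)))
    (hrx : ‖x‖ < r) (hry : ‖y‖ < r) (hrfe : ‖f / e‖ < r)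
    (hr1 : r < 1) (hrz : r * ‖z‖ < 1) :
    Summable (fun p : ℕ × ℕ × ℕ => ‖tripleTerm q a b c e f x y z p‖) ∧
    (∑' p : ℕ × ℕ × ℕ, tripleTerm q a b c e f x y z p) =
      (2 * (Real.pi : ℂ) * Complex.I)⁻¹ *
        ∮ t in C(0, r), integrandF q a b c e f x y z t / t := by
  have hr : 0 < r := (norm_nonneg x).trans_lt hrx
  have hq : q ≠ 0 := norm_pos_iff.1 hq0
  have hf : ∀ n : ℤ, f ≠ q ^ n := by
    intro n
    rcases le_or_gt n 0 with h | h
    · obtain ⟨m, rfl⟩ : ∃ m : ℕ, n = -(m : ℤ) := ⟨n.natAbs, by omega⟩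
      exact hfq' m
    · obtain ⟨m, rfl⟩ : ∃ m : ℕ, n = (m : ℤ) := ⟨n.natAbs, by omega⟩
      simpa using hfq m (by omega)
  have hqf : qinf q f ≠ 0 := by
    refine qinf_ne_zero q f hq1 fun i hi => hfq' i ?_
    rw [zpow_neg, zpow_natCast]
    exact eq_inv_of_mul_eq_one_left hi
  -- facts on the circle
  have hS : ∀ t : ℂ, ‖t‖ = r → Summable (fun p => ‖wT q a b c e f x y z t p‖) ∧
      HasSum (wT q a b c e f x y z t) (integrandF q a b c e f x y z t) := by
    intro t ht
    have ht0 : t ≠ 0 := norm_pos_iff.1 (by rw [ht]; exact hr)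
    have ht1 : ‖t‖ < 1 := by rw [ht]; exact hr1
    have hft : ‖f‖ < ‖e * t‖ := by
      rw [norm_div, div_lt_iff₀ (norm_pos_iff.2 he)] at hrfe
      rw [norm_mul, ht, mul_comm]; exact hrfe
    have hx : ‖x / t‖ < 1 := by rw [norm_div, ht, div_lt_one hr]; exact hrx
    have hy : ‖y / t‖ < 1 := by rw [norm_div, ht, div_lt_one hr]; exact hry
    have hz : ‖z * t‖ < 1 := by rw [norm_mul, ht, mul_comm]; exact hrz
    have s0 := psi_summable q e f t hq hq1 he heq hf hqf ht0 ht1 hft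
    have s1 := qbin_summable q a (x / t) hq1 hx
    have s2 := qbin_summable q b (y / t) hq1 hy
    have s3 := qbin_summable q c (z * t) hq1 hz
    have s23 := s2.mul_norm s3
    have s123 := s1.mul_norm s23
    have s0123 := s0.mul_norm s123
    refine ⟨s0123, ?_⟩
    have e1 := tsum_mul_tsum_of_summable_norm s2 s3
    have e2 := tsum_mul_tsum_of_summable_norm s1 s23
    have e3 := tsum_mul_tsum_of_summable_norm s0 s123
    have : integrandF q a b c e f x y z t = ∑' p, wT q a b c e f x y z t p := by
      refine Eq.trans ?_ e3
      rw [← e2, ← e1, psi_sum q e f t hq hq1 he heq hf hqf ht0 ht1 hft,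
        qbin q a _ hq1 hx, qbin q b _ hq1 hy, qbin q c _ hq1 hz]
      unfold integrandF
      rw [← mul_div_assoc a, ← mul_div_assoc b, ← mul_assoc c]
      simp only [div_eq_mul_inv, mul_inv]
      ring
    rw [this]
    exact s0123.of_norm.hasSum
  have hrn : ‖(r : ℂ)‖ = r := by simp [abs_of_pos hr]
  have hr0 : (r : ℂ) ≠ 0 := by exact_mod_cast hr.ne'
  have hbd : ∀ t : ℂ, ‖t‖ = r → ∀ p, ‖wT q a b c e f x y z t p‖ = ‖wT q a b c e f x y z r p‖ := by
    intro t ht p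
    have ht0 : t ≠ 0 := norm_pos_iff.1 (by rw [ht]; exact hr)
    rw [wT_eq _ _ _ _ _ _ _ _ _ _ ht0, wT_eq _ _ _ _ _ _ _ _ _ _ hr0, norm_mul, norm_mul,
      norm_zpow, norm_zpow, ht, hrn]
  have hsr := (hS r hrn).1
  have part1 : Summable (fun p : ℕ × ℕ × ℕ => ‖tripleTerm q a b c e f x y z p‖) := by
    refine (hsr.comp_injective gI_inj).congr fun p => ?_
    simp only [Function.comp]
    rw [wT_eq _ _ _ _ _ _ _ _ _ _ hr0, wE_gI, zpow_zero, mul_one, wC_gI]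
  refine ⟨part1, ?_⟩
  have hnc : ∀ θ : ℝ, ‖circleMap 0 r θ‖ = r := fun θ => by simp [abs_of_pos hr]
  have hc0 : ∀ θ : ℝ, circleMap 0 r θ ≠ 0 := fun θ => circleMap_ne_center hr.ne'
  have hint : HasSum (fun p => ∮ t in C(0, r), wC q a b c e f x y z p * t ^ wE p / t)
      (∮ t in C(0, r), integrandF q a b c e f x y z t / t) := by
    unfold circleIntegral
    refine intervalIntegral.hasSum_integral_of_dominated_convergence
      (fun p _ => ‖wT q a b c e f x y z r p‖) (fun p => ?_) (fun p => ?_) ?_ ?_ ?_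
    · refine Continuous.aestronglyMeasurable ?_
      simp only [deriv_circleMap, smul_eq_mul]
      refine ((continuous_circleMap 0 r).mul continuous_const).mul
        (Continuous.div (continuous_const.mul ?_) (continuous_circleMap 0 r) hc0)
      exact (continuous_circleMap 0 r).zpow₀ _ fun θ => Or.inl (hc0 θ)
    · refine Eventually.of_forall fun θ _ => le_of_eq ?_
      rw [← hbd _ (hnc θ) p, wT_eq _ _ _ _ _ _ _ _ _ _ (hc0 θ), deriv_circleMap, norm_smul,
        norm_div, norm_mul, Complex.norm_I, mul_one, mul_div_cancel₀]
      rw [hnc]; exact hr.ne'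
    · exact Eventually.of_forall fun θ _ => hsr
    · exact intervalIntegrable_const
    · refine Eventually.of_forall fun θ _ => ?_
      have := (hS _ (hnc θ)).2
      simp only [smul_eq_mul]
      refine HasSum.mul_left _ (HasSum.div_const ?_ _)
      have h3 : (fun p => wC q a b c e f x y z p * circleMap 0 r θ ^ wE p) =
          wT q a b c e f x y z (circleMap 0 r θ) :=
        funext fun p => (wT_eq _ _ _ _ _ _ _ _ _ _ (hc0 θ) p).symm
      rw [h3]; exact this
  simp only [circle_zpow r hr] at hint
  have h2 : HasSum (fun p => tripleTerm q a b c e f x y z p * (2 * (Real.pi : ℂ) * Complex.I))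
      (∮ t in C(0, r), integrandF q a b c e f x y z t / t) := by
    rw [← gI_inj.hasSum_iff] at hint
    · convert hint using 1
      funext p
      simp only [Function.comp]
      rw [if_pos (wE_gI p), wC_gI]
    · intro p hp
      rw [if_neg (wE_ne p hp)]
  have hpi : (2 * (Real.pi : ℂ) * Complex.I) ≠ 0 := Complex.two_pi_I_ne_zero
  rw [← h2.tsum_eq, tsum_mul_right]
  field_simp

theorem triple_sum_eq_contour_integral (q a b c e f x y z : ℂ) (r : ℝ)
    (hq0 : 0 < ‖q‖) (hq1 : ‖q‖ < 1)
    (he : e ≠ 0)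
    (heq : ∀ n : ℕ, 1 ≤ n → e ≠ q ^ n)
    (hfq : ∀ n : ℕ, 1 ≤ n → f ≠ q ^ n)
    (hfq' : ∀ n : ℕ, f ≠ q ^ (-(n : ℤ)))
    (heq' : ∀ n : ℕ, e ≠ q ^ (n + 1))
    (hrx : ‖x‖ < r) (hry : ‖y‖ < r) (hrfe : ‖f / e‖ < r)
    (hr1 : r < 1) (hrz : r * ‖z‖ < 1) :
    Summable (fun p : ℕ × ℕ × ℕ => ‖tripleTerm q a b c e f x y z p‖) ∧
    (∑' p : ℕ × ℕ × ℕ, tripleTerm q a b c e f x y z p) =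
      (2 * (Real.pi : ℂ) * Complex.I)⁻¹ *
        ∮ t in C(0, r), integrandF q a b c e f x y z t / t := by
  exact main_aux q a b c e f x y z r hq0 hq1 he heq hfq hfq' hrx hry hrfe hr1 hrz
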